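/- A 5-tuple (k₁,k₂,k₃,k₄,k₅) of nonnegative integers is realized as the canonical invariants of some coisotropic pair (A,B) in some symplectic vector space (V,ω) if and only if it satisfies the inequalities 0 ≤ k₁ ≤ k₅ ≤ k₂ and k₁ + k₂ ≤ k₃ + k₅ ≤ k₁ + k₄. -/

import Mathlib

/-!
Write `I = A^ω`, an isotropic subspace. Since `I ⊔ B ≤ (I ⊓ B^ω)^ω`, counting dimensions gives
`k₁ + k₂ ≤ k₃ + k₅`; the subspace `B^ω ⊔ (I ⊓ B)` is isotropic, so its dimension `k₃ + k₅ - k₁` is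
at most half that of `V`. Conversely, in the standard symplectic space with basis
`q₀, p₀, …, q_{k₄-1}, p_{k₄-1}` let
* `A^ω` be spanned by the `q_i` with `i < k₂`;
* `B^ω` be spanned by the `q_i` with `k₂ - k₁ ≤ i < k₃ + k₅ - k₁` and the `p_i` with `i < k₂ - k₅`.

The inequalities between the `kᵢ` make these subspaces isotropic, with the required invariants.
-/

open Submodule Module

/-- The ω-orthogonal of a subspace: `W^ω = {v | ω(v,u) = 0 for all u ∈ W}`. -/
def oOrtho {V : Type*} [AddCommGroup V] [Module ℝ V]
    (ω : V →ₗ[ℝ] V →ₗ[ℝ] ℝ) (W : Submodule ℝ V) : Submodule ℝ V where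
  carrier := {v | ∀ u ∈ W, ω v u = 0}
  add_mem' := by
    intro a b ha hb u hu
    rw [Set.mem_setOf_eq] at *
    rw [map_add, LinearMap.add_apply, ha u hu, hb u hu, add_zero]
  zero_mem' := by intro u _; simp
  smul_mem' := by
    intro c a ha u hu
    rw [Set.mem_setOf_eq] at *
    rw [map_smul, LinearMap.smul_apply, ha u hu, smul_zero]

universe u

open LinearMap (BilinForm)

section Dimension

variable {K V : Type*} [Field K] [AddCommGroup V] [Module K V] {ω : BilinForm K V}
  {B I W W₁ W₂ : Submodule K V}

theorem le_orthogonal_comm (hω : ω.IsRefl) : W₁ ≤ ω.orthogonal W₂ ↔ W₂ ≤ ω.orthogonal W₁ :=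
  ⟨fun h y hy x hx ↦ hω y x (h hx y hy), fun h x hx y hy ↦ hω x y (h hy x hx)⟩

theorem sup_le_orthogonal_sup (hω : ω.IsRefl) (h₁ : W₁ ≤ ω.orthogonal W₁)
    (h₂ : W₂ ≤ ω.orthogonal W₂) (h₁₂ : W₁ ≤ ω.orthogonal W₂) :
    W₁ ⊔ W₂ ≤ ω.orthogonal (W₁ ⊔ W₂) := by
  have h₂₁ : W₂ ≤ ω.orthogonal W₁ := (le_orthogonal_comm hω).mp h₁₂
  exact sup_le ((le_orthogonal_comm hω).mp (sup_le h₁ h₂₁))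
    ((le_orthogonal_comm hω).mp (sup_le h₁₂ h₂))

variable [FiniteDimensional K V]

theorem finrank_orthogonal_add_finrank (hn : ω.Nondegenerate) (W : Submodule K V) :
    finrank K (ω.orthogonal W) + finrank K W = finrank K V := by
  rw [BilinForm.finrank_orthogonal hn, Nat.sub_add_cancel W.finrank_le]

theorem two_mul_finrank_le_of_le_orthogonal (hn : ω.Nondegenerate) (hW : W ≤ ω.orthogonal W) :
    2 * finrank K W ≤ finrank K V := by
  have := finrank_orthogonal_add_finrank hn W
  have := finrank_mono hW
  lia

theorem finrank_inf_orthogonal_add_finrank_le (hω : ω.IsRefl) (hn : ω.Nondegenerate)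
    (hI : I ≤ ω.orthogonal I) (B : Submodule K V) :
    finrank K (I ⊓ ω.orthogonal B : Submodule K V) + finrank K I ≤
      finrank K (ω.orthogonal B) + finrank K (I ⊓ B : Submodule K V) := by
  have sup_le_orthogonal : I ⊔ B ≤ ω.orthogonal (I ⊓ ω.orthogonal B) :=
    sup_le (hI.trans (BilinForm.orthogonal_le inf_le_left))
      ((le_orthogonal_comm hω).mp inf_le_right)
  have := finrank_mono sup_le_orthogonal
  have := finrank_orthogonal_add_finrank hn (I ⊓ ω.orthogonal B)
  have := finrank_orthogonal_add_finrank hn B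
  have := finrank_sup_add_finrank_inf_eq I B
  lia

theorem two_mul_finrank_orthogonal_add_finrank_inf_le (hω : ω.IsRefl) (hn : ω.Nondegenerate)
    (hI : I ≤ ω.orthogonal I) (hB : ω.orthogonal B ≤ B) :
    2 * (finrank K (ω.orthogonal B) + finrank K (I ⊓ B : Submodule K V)) ≤
      2 * finrank K (I ⊓ ω.orthogonal B : Submodule K V) + finrank K V := by
  have isotropic : ω.orthogonal B ⊔ (I ⊓ B) ≤ ω.orthogonal (ω.orthogonal B ⊔ (I ⊓ B)) :=
    sup_le_orthogonal_sup hω (BilinForm.orthogonal_le hB)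
      (inf_le_left.trans (hI.trans (BilinForm.orthogonal_le inf_le_left)))
      (BilinForm.orthogonal_le inf_le_right)
  have inf_eq : ω.orthogonal B ⊓ (I ⊓ B) = I ⊓ ω.orthogonal B := by
    rw [inf_left_comm, inf_eq_left.mpr hB]
  have := two_mul_finrank_le_of_le_orthogonal hn isotropic
  have := finrank_sup_add_finrank_inf_eq (ω.orthogonal B) (I ⊓ B)
  rw [inf_eq] at this
  lia

end Dimension

section SymplecticDouble

variable {R M : Type*} [CommRing R] [AddCommGroup M] [Module R M] {b : BilinForm R M}

/-- The alternating form `((x, y), (x', y')) ↦ b x y' - b x' y` on `M × M`. For the dot product on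
`ι → R` it is the standard symplectic form, the two factors holding the `q`- and the
`p`-coordinates. -/
def symplecticDouble (b : BilinForm R M) : BilinForm R (M × M) :=
  b.compl₁₂ (.fst R M M) (.snd R M M) - b.flip.compl₁₂ (.snd R M M) (.fst R M M)

theorem symplecticDouble_apply (b : BilinForm R M) (v w : M × M) :
    symplecticDouble b v w = b v.1 w.2 - b w.1 v.2 := rfl

theorem isAlt_symplecticDouble (b : BilinForm R M) : (symplecticDouble b).IsAlt :=
  fun v ↦ sub_self (b v.1 v.2)

theorem nondegenerate_symplecticDouble (hb : b.Nondegenerate) :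
    (symplecticDouble b).Nondegenerate := by
  refine (isAlt_symplecticDouble b).isRefl.nondegenerate_iff_separatingLeft.mpr
    fun v hv ↦ Prod.ext (hb.1 _ fun y ↦ ?_) (hb.2 _ fun x ↦ ?_)
  · simpa [symplecticDouble_apply] using hv (0, y)
  · simpa [symplecticDouble_apply] using hv (x, 0)

theorem orthogonal_symplecticDouble_prod (hb : b.IsSymm) (E F : Submodule R M) :
    (symplecticDouble b).orthogonal (E.prod F) = (b.orthogonal F).prod (b.orthogonal E) := by
  ext v
  refine ⟨fun hv ↦ ⟨fun y hy ↦ ?_, fun x hx ↦ ?_⟩, fun ⟨hF, hE⟩ w ⟨hw₁, hw₂⟩ ↦ ?_⟩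
  · simpa [symplecticDouble_apply, hb.eq v.1 y] using hv (0, y) ⟨E.zero_mem, hy⟩
  · simpa [symplecticDouble_apply] using hv (x, 0) ⟨hx, F.zero_mem⟩
  · rw [symplecticDouble_apply, hE _ hw₁, hb.eq, hF _ hw₂, sub_zero]

end SymplecticDouble

section SpanSubset

variable {R ι : Type*} [CommRing R]

theorem spanSubset_mono [Finite ι] {s t : Set ι} (h : s ⊆ t) :
    Pi.spanSubset R s ≤ Pi.spanSubset R t :=
  span_mono (Set.image_mono h)

theorem spanSubset_inf [Finite ι] (s t : Set ι) :
    Pi.spanSubset R s ⊓ Pi.spanSubset R t = Pi.spanSubset R (s ∩ t) := by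
  ext v
  simp only [mem_inf, Pi.mem_spanSubset_iff, Set.mem_inter_iff, not_and_or, or_imp, forall_and]

variable (R ι) in
/-- The dot product on `ι → R`, as a bilinear form. -/
abbrev dotProductForm [Fintype ι] : BilinForm R (ι → R) := dotProductBilin R R

theorem isSymm_dotProductForm [Fintype ι] : (dotProductForm R ι).IsSymm := ⟨dotProduct_comm⟩

theorem nondegenerate_dotProductForm [Fintype ι] : (dotProductForm R ι).Nondegenerate :=
  (isSymm_dotProductForm (R := R) (ι := ι)).isRefl.nondegenerate_iff_separatingLeft.mpr
    dotProduct_eq_zero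

theorem orthogonal_dotProductForm_spanSubset [Fintype ι] (s : Set ι) :
    (dotProductForm R ι).orthogonal (Pi.spanSubset R s) = Pi.spanSubset R sᶜ := by
  classical
  ext v
  rw [Pi.mem_spanSubset_iff]
  refine ⟨fun hv i hi ↦ ?_, fun hv u hu ↦ Finset.sum_eq_zero fun i _ ↦ ?_⟩
  · rw [← single_one_dotProduct i v]
    exact hv _ (subset_span ⟨i, not_not.mp hi, Pi.basisFun_apply R ι i⟩)
  · by_cases hi : i ∈ s
    · rw [hv i (not_not.mpr hi), mul_zero]
    · rw [Pi.mem_spanSubset_iff.mp hu i hi, zero_mul]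

end SpanSubset

section CoordinateSubspace

theorem finrank_submodule_prod {K V V' : Type*} [Field K] [AddCommGroup V] [Module K V]
    [AddCommGroup V'] [Module K V'] [FiniteDimensional K V] [FiniteDimensional K V']
    (E : Submodule K V) (F : Submodule K V') :
    finrank K (E.prod F) = finrank K E + finrank K F := by
  have range_eq : (E.subtype.prodMap F.subtype).range = E.prod F := by
    rw [LinearMap.range_prodMap, range_subtype, range_subtype]
  rw [← range_eq, LinearMap.finrank_range_of_inj
    (E.subtype_injective.prodMap F.subtype_injective), finrank_prod]

variable {K ι : Type*} [Field K]

variable (K) in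
/-- The coordinate subspace of the standard symplectic space spanned by the basis vectors `q_i` with
`i ∈ s` and `p_i` with `i ∈ t`. -/
noncomputable def coordinateSubspace [Finite ι] (s t : Set ι) : Submodule K ((ι → K) × (ι → K)) :=
  (Pi.spanSubset K s).prod (Pi.spanSubset K t)

theorem coordinateSubspace_mono [Finite ι] {s s' t t' : Set ι} (hs : s ⊆ s') (ht : t ⊆ t') :
    coordinateSubspace K s t ≤ coordinateSubspace K s' t' :=
  prod_mono (spanSubset_mono hs) (spanSubset_mono ht)

theorem coordinateSubspace_inf [Finite ι] (s t s' t' : Set ι) :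
    coordinateSubspace K s t ⊓ coordinateSubspace K s' t' =
      coordinateSubspace K (s ∩ s') (t ∩ t') := by
  simp only [coordinateSubspace, prod_inf_prod, spanSubset_inf]

theorem finrank_coordinateSubspace [Finite ι] (s t : Set ι) :
    finrank K (coordinateSubspace K s t) = s.ncard + t.ncard := by
  rw [coordinateSubspace, finrank_submodule_prod, Pi.dim_spanSubset, Pi.dim_spanSubset]

theorem orthogonal_coordinateSubspace [Fintype ι] (s t : Set ι) :
    (symplecticDouble (dotProductForm K ι)).orthogonal (coordinateSubspace K s t) =
      coordinateSubspace K tᶜ sᶜ := by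
  have isSymm : (dotProductForm K ι).IsSymm := isSymm_dotProductForm
  rw [coordinateSubspace, orthogonal_symplecticDouble_prod isSymm,
    orthogonal_dotProductForm_spanSubset, orthogonal_dotProductForm_spanSubset, coordinateSubspace]

end CoordinateSubspace

theorem ncard_preimage_val_Ico {n b : ℕ} (hb : b ≤ n) (a : ℕ) :
    ((↑) ⁻¹' Set.Ico a b : Set (Fin n)).ncard = b - a := by
  have subset_range : Set.Ico a b ⊆ Set.range ((↑) : Fin n → ℕ) := by
    rw [Fin.range_val]
    exact Set.Ico_subset_Iio_self.trans (Set.Iio_subset_Iio hb)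
  rw [Set.ncard_preimage_of_injective_subset_range Fin.val_injective subset_range,
    Set.ncard_Ico_nat]

theorem exists_isotropic_index_sets {k₁ k₂ k₃ k₄ k₅ : ℕ} (h₁₅ : k₁ ≤ k₅) (h₅₂ : k₅ ≤ k₂)
    (h : k₁ + k₂ ≤ k₃ + k₅) (h' : k₃ + k₅ ≤ k₁ + k₄) :
    ∃ s s' t' : Set (Fin k₄), s' ⊆ t'ᶜ ∧ (s ∩ s').ncard = k₁ ∧ s.ncard = k₂ ∧
      s'.ncard + t'.ncard = k₃ ∧ (s ∩ t'ᶜ).ncard = k₅ := by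
  let interval (a b : ℕ) : Set (Fin k₄) := (↑) ⁻¹' Set.Ico a b
  have mem_interval (a b : ℕ) (i : Fin k₄) : i ∈ interval a b ↔ a ≤ i ∧ i < b := Iff.rfl
  have ncard_interval {a b : ℕ} (hb : b ≤ k₄) : (interval a b).ncard = b - a :=
    ncard_preimage_val_Ico hb a
  have inter_eq : interval 0 k₂ ∩ interval (k₂ - k₁) (k₃ + k₅ - k₁) = interval (k₂ - k₁) k₂ := by
    ext i
    simp only [Set.mem_inter_iff, mem_interval]
    lia
  have inter_compl_eq : interval 0 k₂ ∩ (interval 0 (k₂ - k₅))ᶜ = interval (k₂ - k₅) k₂ := by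
    ext i
    simp only [Set.mem_inter_iff, Set.mem_compl_iff, mem_interval]
    lia
  refine ⟨interval 0 k₂, interval (k₂ - k₁) (k₃ + k₅ - k₁), interval 0 (k₂ - k₅),
    fun i hi hi' ↦ ?_, ?_, ?_, ?_, ?_⟩
  · rw [mem_interval] at hi hi'
    lia
  · rw [inter_eq, ncard_interval] <;> lia
  · rw [ncard_interval] <;> lia
  · rw [ncard_interval, ncard_interval] <;> lia
  · rw [inter_compl_eq, ncard_interval] <;> lia

theorem exists_coisotropic_pair (K : Type u) [Field K] {k₁ k₂ k₃ k₄ k₅ : ℕ} (h₁₅ : k₁ ≤ k₅)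
    (h₅₂ : k₅ ≤ k₂) (h : k₁ + k₂ ≤ k₃ + k₅) (h' : k₃ + k₅ ≤ k₁ + k₄) :
    ∃ A B : Submodule K ((Fin k₄ → K) × (Fin k₄ → K)),
      let ω := symplecticDouble (dotProductForm K (Fin k₄))
      ω.orthogonal A ≤ A ∧ ω.orthogonal B ≤ B ∧
      finrank K (ω.orthogonal A ⊓ ω.orthogonal B : Submodule K _) = k₁ ∧
      finrank K (ω.orthogonal A) = k₂ ∧
      finrank K (ω.orthogonal B) = k₃ ∧
      finrank K (ω.orthogonal A ⊓ B : Submodule K _) = k₅ := by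
  obtain ⟨s, s', t', hs', h₁, h₂, h₃, h₅⟩ := exists_isotropic_index_sets h₁₅ h₅₂ h h'
  refine ⟨coordinateSubspace K Set.univ sᶜ, coordinateSubspace K t'ᶜ s'ᶜ, ?_⟩
  intro ω
  have orthogonal_A : ω.orthogonal (coordinateSubspace K Set.univ sᶜ) =
      coordinateSubspace K s ∅ := by
    rw [orthogonal_coordinateSubspace, compl_compl, Set.compl_univ]
  have orthogonal_B : ω.orthogonal (coordinateSubspace K t'ᶜ s'ᶜ) =
      coordinateSubspace K s' t' := by
    rw [orthogonal_coordinateSubspace, compl_compl, compl_compl]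
  rw [orthogonal_A, orthogonal_B, coordinateSubspace_inf, coordinateSubspace_inf,
    finrank_coordinateSubspace, finrank_coordinateSubspace, finrank_coordinateSubspace,
    finrank_coordinateSubspace, Set.empty_inter, Set.empty_inter, Set.ncard_empty, h₁, h₂, h₃, h₅]
  exact ⟨coordinateSubspace_mono (Set.subset_univ _) (Set.empty_subset _),
    coordinateSubspace_mono hs' (Set.subset_compl_comm.mp hs'), rfl, rfl, rfl, rfl⟩

theorem stmt19_general (K : Type u) [Field K] (k₁ k₂ k₃ k₄ k₅ : ℕ) :
    (∃ (V : Type u) (_ : AddCommGroup V) (_ : Module K V) (_ : FiniteDimensional K V)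
        (ω : BilinForm K V) (A B : Submodule K V),
      ω.IsAlt ∧ ω.Nondegenerate ∧
      ω.orthogonal A ≤ A ∧ ω.orthogonal B ≤ B ∧
      finrank K (ω.orthogonal A ⊓ ω.orthogonal B : Submodule K V) = k₁ ∧
      finrank K (ω.orthogonal A) = k₂ ∧
      finrank K (ω.orthogonal B) = k₃ ∧
      finrank K V = 2 * k₄ ∧
      finrank K (ω.orthogonal A ⊓ B : Submodule K V) = k₅) ↔
    (k₁ ≤ k₅ ∧ k₅ ≤ k₂ ∧ k₁ + k₂ ≤ k₃ + k₅ ∧ k₃ + k₅ ≤ k₁ + k₄) := by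
  constructor
  · rintro ⟨V, _, _, _, ω, A, B, hω, hn, hA, hB, rfl, rfl, rfl, hV, rfl⟩
    have hI := BilinForm.orthogonal_le (B := ω) hA
    have := two_mul_finrank_orthogonal_add_finrank_inf_le hω.isRefl hn hI hB
    exact ⟨finrank_mono (inf_le_inf_left _ hB), finrank_mono inf_le_left,
      finrank_inf_orthogonal_add_finrank_le hω.isRefl hn hI B, by lia⟩
  · rintro ⟨h₁₅, h₅₂, h, h'⟩
    obtain ⟨A, B, hA, hB, h₁, h₂, h₃, h₅⟩ := exists_coisotropic_pair K h₁₅ h₅₂ h h'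
    exact ⟨_, _, _, inferInstance, _, A, B, isAlt_symplecticDouble _,
      nondegenerate_symplecticDouble nondegenerate_dotProductForm, hA, hB, h₁, h₂, h₃,
      by rw [finrank_prod, finrank_fin_fun, two_mul], h₅⟩

theorem oOrtho_eq_orthogonal {V : Type*} [AddCommGroup V] [Module ℝ V] {ω : BilinForm ℝ V}
    (hω : ω.IsRefl) : oOrtho ω = ω.orthogonal :=
  funext fun _ ↦ Submodule.ext fun _ ↦ forall₂_congr fun _ _ ↦ hω.eq_iff

/-- a 5-tuple `(k₁,…,k₅)` of nonnegative integers is the tuple of canonical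
invariants of some coisotropic pair `(A,B)` in some symplectic vector space `(V,ω)` iff
`0 ≤ k₁ ≤ k₅ ≤ k₂` and `k₁ + k₂ ≤ k₃ + k₅ ≤ k₁ + k₄`. -/
theorem stmt19 (k₁ k₂ k₃ k₄ k₅ : ℕ) :
    (∃ (V : Type) (_ : AddCommGroup V) (_ : Module ℝ V) (_ : FiniteDimensional ℝ V)
        (ω : V →ₗ[ℝ] V →ₗ[ℝ] ℝ) (A B : Submodule ℝ V),
      ω.IsAlt ∧ ω.Nondegenerate ∧
      oOrtho ω A ≤ A ∧ oOrtho ω B ≤ B ∧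
      Module.finrank ℝ (oOrtho ω A ⊓ oOrtho ω B : Submodule ℝ V) = k₁ ∧
      Module.finrank ℝ (oOrtho ω A) = k₂ ∧
      Module.finrank ℝ (oOrtho ω B) = k₃ ∧
      Module.finrank ℝ V = 2 * k₄ ∧
      Module.finrank ℝ (oOrtho ω A ⊓ B : Submodule ℝ V) = k₅) ↔
    (k₁ ≤ k₅ ∧ k₅ ≤ k₂ ∧ k₁ + k₂ ≤ k₃ + k₅ ∧ k₃ + k₅ ≤ k₁ + k₄) := by
  rw [← stmt19_general ℝ]
  refine exists₅_congr fun V _ _ _ ω ↦ exists₂_congr fun A B ↦ and_congr_right fun hω ↦ ?_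
  rw [oOrtho_eq_orthogonal hω.isRefl]
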